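/- arXiv:1604.06247 — 4 statements merged into one kernel-verified Lean document; each statement's English description precedes it below -/
import Mathlib

section
/- Let R be a commutative ring and A an m×n matrix over R with m ≤ n, regarded as a linear map R^n → R^m. Then (ann(coker A))^m ⊆ I_m(A) ⊆ ann(coker A) ⊆ √(I_m(A)), where I_m(A) is the ideal of m×m minors of A. -/
/-- The annihilator of the cokernel of (the linear map defined by) a matrix. -/
def Matrix.annCoker {R : Type*} [CommRing R] {m n : Type*} [Fintype n] [Fintype m]
    (A : Matrix m n R) : Ideal R :=
  Module.annihilator R ((m → R) ⧸ LinearMap.range A.mulVecLin)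

/-- The determinantal ideal `I_j(A)` generated by all `j × j` minors of `A`. -/
def Matrix.minorsIdeal {R : Type*} [CommRing R] {m n : ℕ}
    (A : Matrix (Fin m) (Fin n) R) (j : ℕ) : Ideal R :=
  Ideal.span { d | ∃ (r : Fin j → Fin m) (c : Fin j → Fin n), d = (A.submatrix r c).det }

/-! If `f 1, …, f m` annihilate `coker A`, then each `f i • e i` has a preimage under `A`. Taking
these preimages as the columns of a matrix `B` gives `A * B = diagonal f`, and multilinearity of
`det (A * B)` in its columns writes `∏ i, f i` as a combination of maximal minors of `A`.
Conversely, a choice of `m` columns of `A` has the form `A * P`, and `det (A * P)` kills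
`coker (A * P)` because of the adjugate, hence also its quotient `coker A`. -/

section Cokernel

variable {R m n p : Type*} [CommRing R] [Fintype m] [Fintype n] [Fintype p]

theorem mem_annCoker_iff {A : Matrix m n R} {f : R} :
    f ∈ A.annCoker ↔ ∀ v, f • v ∈ LinearMap.range A.mulVecLin := by
  simp only [Matrix.annCoker, Submodule.annihilator_quotient, Submodule.mem_colon, Set.mem_univ,
    forall_const]

theorem annCoker_mul_le (A : Matrix m n R) (B : Matrix n p R) :
    (A * B).annCoker ≤ A.annCoker := by
  intro f hf
  rw [mem_annCoker_iff] at hf ⊢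
  intro v
  have hv := hf v
  rw [Matrix.mulVecLin_mul] at hv
  exact LinearMap.range_comp_le_range _ _ hv

theorem det_mem_annCoker [DecidableEq m] (A : Matrix m m R) : A.det ∈ A.annCoker :=
  mem_annCoker_iff.2 fun v => ⟨A.adjugate.mulVec v, by
    rw [Matrix.mulVecLin_apply, Matrix.mulVec_mulVec, Matrix.mul_adjugate, Matrix.smul_mulVec,
      Matrix.one_mulVec]⟩

theorem det_submatrix_mem_annCoker [DecidableEq m] (A : Matrix m n R) (r : m → m) (c : m → n) :
    (A.submatrix r c).det ∈ A.annCoker := by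
  classical
  have columns : A * (1 : Matrix n n R).submatrix id c = A.submatrix id c :=
    Matrix.mul_submatrix_one (Equiv.refl n) c A
  have rows : (1 : Matrix m m R).submatrix r id * A.submatrix id c = A.submatrix r c :=
    Matrix.one_submatrix_mul r (Equiv.refl m) (A.submatrix id c)
  rw [← rows, Matrix.det_mul]
  refine Ideal.mul_mem_left _ _ (annCoker_mul_le A ((1 : Matrix n n R).submatrix id c) ?_)
  rw [columns]
  exact det_mem_annCoker _

theorem exists_mul_eq_diagonal [DecidableEq m] {A : Matrix m n R} {f : m → R}
    (hf : ∀ i, f i ∈ A.annCoker) : ∃ B : Matrix n m R, A * B = Matrix.diagonal f := by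
  choose w hw using fun i => mem_annCoker_iff.1 (hf i) (Pi.single i 1)
  refine ⟨(Matrix.of w).transpose, Matrix.ext_col fun j => ?_⟩
  calc (A * (Matrix.of w).transpose).col j = A.mulVec (w j) := rfl
    _ = f j • Pi.single j 1 := hw j
    _ = (Matrix.diagonal f).col j := by
      rw [Matrix.col_diagonal, ← Pi.single_smul, smul_eq_mul, mul_one]

end Cokernel

theorem det_mul_eq_sum_prod_mul_det_submatrix {R m n : Type*} [CommRing R] [Fintype m]
    [DecidableEq m] [Fintype n] (A : Matrix m n R) (B : Matrix n m R) :
    (A * B).det = ∑ c : m → n, (∏ i, B (c i) i) * (A.submatrix id c).det := by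
  classical
  have columns : (A * B).transpose = fun i => ∑ k, B k i • A.transpose k := by
    ext i j
    simp only [Matrix.transpose_apply, Matrix.mul_apply, Finset.sum_apply, Pi.smul_apply,
      smul_eq_mul, mul_comm]
  calc (A * B).det = Matrix.detRowAlternating fun i => ∑ k, B k i • A.transpose k := by
        rw [← Matrix.det_transpose, columns]
        rfl
    _ = ∑ c : m → n, Matrix.detRowAlternating fun i => B (c i) i • A.transpose (c i) :=
        MultilinearMap.map_sum Matrix.detRowAlternating.toMultilinearMap _
    _ = ∑ c : m → n, (∏ i, B (c i) i) * (A.submatrix id c).det := by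
        refine Finset.sum_congr rfl fun c _ => ?_
        rw [← Matrix.det_transpose (A.submatrix id c)]
        exact MultilinearMap.map_smul_univ Matrix.detRowAlternating.toMultilinearMap _ _

theorem ideal_pow_le_of_prod_mem {R : Type*} [CommSemiring R] {I J : Ideal R} {k : ℕ}
    (h : ∀ f : Fin k → R, (∀ i, f i ∈ I) → ∏ i, f i ∈ J) : I ^ k ≤ J := by
  rw [Submodule.pow_eq_span_pow_set, Submodule.span_le]
  intro x hx
  obtain ⟨f, rfl⟩ := Set.mem_pow.1 hx
  rw [List.prod_ofFn]
  exact h _ fun i => (f i).2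

section MinorsIdeal

variable {R : Type*} [CommRing R] {m n : ℕ} (A : Matrix (Fin m) (Fin n) R)

theorem det_submatrix_mem_minorsIdeal {j : ℕ} (r : Fin j → Fin m) (c : Fin j → Fin n) :
    (A.submatrix r c).det ∈ A.minorsIdeal j :=
  Ideal.subset_span ⟨r, c, rfl⟩

theorem det_mul_mem_minorsIdeal (B : Matrix (Fin n) (Fin m) R) :
    (A * B).det ∈ A.minorsIdeal m := by
  rw [det_mul_eq_sum_prod_mul_det_submatrix]
  exact Ideal.sum_mem _ fun c _ =>
    Ideal.mul_mem_left _ _ (det_submatrix_mem_minorsIdeal A id c)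

theorem annCoker_pow_le_minorsIdeal : A.annCoker ^ m ≤ A.minorsIdeal m := by
  refine ideal_pow_le_of_prod_mem fun f hf => ?_
  obtain ⟨B, hB⟩ := exists_mul_eq_diagonal hf
  rw [← Matrix.det_diagonal, ← hB]
  exact det_mul_mem_minorsIdeal A B

theorem minorsIdeal_le_annCoker : A.minorsIdeal m ≤ A.annCoker := by
  refine Ideal.span_le.2 ?_
  rintro _ ⟨r, c, rfl⟩
  exact det_submatrix_mem_annCoker A r c

theorem annCoker_le_radical_minorsIdeal : A.annCoker ≤ (A.minorsIdeal m).radical :=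
  fun _ hf => ⟨m, annCoker_pow_le_minorsIdeal A (Ideal.pow_mem_pow hf m)⟩

end MinorsIdeal

theorem stmt4_general {R : Type*} [CommRing R] {m n : ℕ} (A : Matrix (Fin m) (Fin n) R) :
    A.annCoker ^ m ≤ A.minorsIdeal m ∧ A.minorsIdeal m ≤ A.annCoker ∧
      A.annCoker ≤ (A.minorsIdeal m).radical :=
  ⟨annCoker_pow_le_minorsIdeal A, minorsIdeal_le_annCoker A, annCoker_le_radical_minorsIdeal A⟩

theorem stmt4 {R : Type*} [CommRing R] {m n : ℕ} (hmn : m ≤ n)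
    (A : Matrix (Fin m) (Fin n) R) :
    A.annCoker ^ m ≤ A.minorsIdeal m ∧ A.minorsIdeal m ≤ A.annCoker ∧
      A.annCoker ≤ (A.minorsIdeal m).radical :=
  stmt4_general A
end

section
/- Let R be a commutative ring and A an m×m matrix over R whose determinant is not a zero divisor. Then ann(coker A) = ann(coker Aᵀ). -/
/-! A scalar `r` kills `coker A` iff `r • 1 = A * B` for some `B`, whose columns are lifts of `r`
times the basis vectors; transposing, it kills `coker Aᵀ` iff `r • 1 = B * A` for some `B`. As
`r • 1` is central and `A` is cancellable when its determinant is, the same `B` serves both: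
`A * (B * A) = (A * B) * A = A * (r • 1)`. -/

open scoped Matrix

theorem mul_eq_iff_mul_eq_of_isRegular_of_commute {S : Type*} [Semigroup S] {a b c : S}
    (ha : IsRegular a) (hc : Commute c a) : a * b = c ↔ b * a = c := by
  constructor
  · rintro rfl
    exact (ha.left.commute_mul_left_iff.mp hc).eq.symm
  · rintro rfl
    exact (ha.right.commute_mul_right_iff.mp hc).eq

section AnnCoker

variable {R m n : Type*} [CommRing R] [Fintype m] [Fintype n]

theorem mem_annCoker_iff_forall_exists_mulVec_eq {A : Matrix m n R} {r : R} :
    r ∈ A.annCoker ↔ ∀ v : m → R, ∃ w : n → R, A *ᵥ w = r • v := by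
  simp only [Matrix.annCoker, Submodule.annihilator_quotient, Submodule.mem_colon,
    Set.mem_univ, true_imp_iff, LinearMap.mem_range, Matrix.mulVecLin_apply]

theorem mem_annCoker_iff_exists_mul_eq_smul_one [DecidableEq m] {A : Matrix m n R} {r : R} :
    r ∈ A.annCoker ↔ ∃ B : Matrix n m R, A * B = r • 1 := by
  rw [mem_annCoker_iff_forall_exists_mulVec_eq]
  constructor
  · intro h
    choose col hcol using fun j : m ↦ h (Pi.single j 1)
    refine ⟨(Matrix.of col)ᵀ, Matrix.ext_col fun j ↦ ?_⟩
    calc (A * (Matrix.of col)ᵀ).col j = A *ᵥ col j := rfl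
      _ = r • Pi.single j 1 := hcol j
      _ = (r • (1 : Matrix m m R)).col j := by
        rw [← Matrix.mulVec_single_one, Matrix.smul_mulVec, Matrix.one_mulVec]
  · rintro ⟨B, hB⟩ v
    exact ⟨B *ᵥ v, by rw [Matrix.mulVec_mulVec, hB, Matrix.smul_mulVec, Matrix.one_mulVec]⟩

theorem mem_annCoker_transpose_iff_exists_mul_eq_smul_one [DecidableEq n] {A : Matrix m n R}
    {r : R} : r ∈ Aᵀ.annCoker ↔ ∃ B : Matrix n m R, B * A = r • 1 := by
  have transpose_mul_eq (B : Matrix n m R) : Aᵀ * Bᵀ = r • 1 ↔ B * A = r • 1 := by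
    rw [← Matrix.transpose_mul, ← Matrix.transpose_inj, Matrix.transpose_transpose,
      Matrix.transpose_smul, Matrix.transpose_one]
  rw [mem_annCoker_iff_exists_mul_eq_smul_one]
  exact ⟨fun ⟨B, hB⟩ ↦ ⟨Bᵀ, (transpose_mul_eq Bᵀ).mp hB⟩,
    fun ⟨B, hB⟩ ↦ ⟨Bᵀ, (transpose_mul_eq B).mpr hB⟩⟩

theorem stmt7_general [DecidableEq n] (A : Matrix n n R) (hdet : A.det ∈ nonZeroDivisors R) :
    A.annCoker = Aᵀ.annCoker := by
  have hA : IsRegular A :=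
    Matrix.isRegular_of_isLeftRegular_det (isRegular_iff_mem_nonZeroDivisors.mpr hdet).left
  ext r
  have hr : Commute (r • (1 : Matrix n n R)) A := (Commute.one_left A).smul_left r
  rw [mem_annCoker_iff_exists_mul_eq_smul_one, mem_annCoker_transpose_iff_exists_mul_eq_smul_one]
  exact exists_congr fun _ ↦ mul_eq_iff_mul_eq_of_isRegular_of_commute hA hr

end AnnCoker

theorem stmt7 {R : Type*} [CommRing R] {m : ℕ} (A : Matrix (Fin m) (Fin m) R)
    (hdet : A.det ∈ nonZeroDivisors R) :
    A.annCoker = A.transpose.annCoker :=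
  stmt7_general A hdet
end

section
/- Let R be a commutative ring and φ : E → F a map of finite free R-modules with rank(F) = m. For any 1 ≤ j ≤ m the ideals satisfy I_j(φ) ⊆ ann.coker_j(φ) and (ann.coker_j(φ))^j ⊆ I_j(φ), where I_j(φ) is the ideal of j×j minors of φ and ann.coker_j(φ) := ann(Λ^{m+1-j} coker(φ)). -/
/-- The generalized annihilator-of-cokernel
`ann.coker_j(A) := ann (Λ^{m+1-j} (coker A))`. -/
def Matrix.annCokerJ {R : Type*} [CommRing R] {m n : ℕ}
    (A : Matrix (Fin m) (Fin n) R) (j : ℕ) : Ideal R :=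
  Module.annihilator R ↥(⋀[R]^(m + 1 - j) ((Fin m → R) ⧸ LinearMap.range A.mulVecLin))

/-!
Work with a submodule `N` of a free module `F` of rank `m`, and let `I_j` be the ideal generated by
the values on `N` of the alternating `j`-forms `f` of `F`.

If `j + k > m`, the wedge product of `f` with `Fᵏ → Λᵏ(F/N)` is alternating in more than `m`
variables, so it vanishes; for `u` in `N` its value at `(u, y)` is `f(u) • (ȳ₁ ∧ ⋯ ∧ ȳₖ)`, since
every shuffle moving an entry of `u` into the second factor dies in `F/N`. Hence `I_j` kills
`Λᵏ(F/N)`.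

Conversely let `a` kill `Λᵏ(F/N)` with `i + k = m`. Every value `f(u)` of an `i`-form is a
combination of determinants `det(u, y)` in which `y` consists of basis vectors. For `u` in `N` the
form `det(u, ·)` descends modulo `I_{i+1}` to `Λᵏ(F/N)`, so it is killed by `a`, whence
`a I_i ⊆ I_{i+1}`. Iterating from `I_0 = R` gives the inclusion of powers.
-/

open Module
open scoped TensorProduct

section Embedding

variable {α β γ : Type*}

theorem exists_sum_compl_range_equiv (p : α ↪ γ) :
    ∃ e : α ⊕ ↥(Set.range p)ᶜ ≃ γ, ∀ x, e (Sum.inl x) = p x := by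
  classical
  exact ⟨((Equiv.ofInjective p p.injective).sumCongr (.refl _)).trans
    (Equiv.Set.sumCompl (Set.range p)), fun _ => rfl⟩

theorem exists_sum_equiv_of_card_eq [Fintype α] [Fintype β] [Fintype γ] (p : α ↪ γ)
    (h : Fintype.card α + Fintype.card β = Fintype.card γ) :
    ∃ e : α ⊕ β ≃ γ, ∀ x, e (Sum.inl x) = p x := by
  classical
  obtain ⟨e, he⟩ := exists_sum_compl_range_equiv p
  have hcard := Fintype.card_congr e
  rw [← h, Fintype.card_sum, Nat.add_left_cancel_iff] at hcard
  exact ⟨((Equiv.refl α).sumCongr (Fintype.equivOfCardEq hcard.symm)).trans e, he⟩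

end Embedding

section AlternatingMap

variable {R M M' P Q ι κ : Type*} [CommRing R] [AddCommGroup M] [Module R M]
  [AddCommGroup M'] [Module R M'] [AddCommGroup P] [Module R P] [AddCommGroup Q] [Module R Q]

/-- The alternating map `v ↦ f (u, v)` obtained from an alternating map `f` on a sum of index types
by fixing the arguments `u` indexed by the left summand. -/
def alternatingFixLeft (f : M [⋀^ι ⊕ κ]→ₗ[R] P) (u : ι → M) : M [⋀^κ]→ₗ[R] P where
  __ := f.toMultilinearMap.currySum u
  map_eq_zero_of_eq' v a b hab hne :=
    f.map_eq_zero_of_eq (Sum.elim u v) (i := .inr a) (j := .inr b) hab (Sum.inr_injective.ne hne)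

theorem alternatingFixLeft_apply (f : M [⋀^ι ⊕ κ]→ₗ[R] P) (u : ι → M) (v : κ → M) :
    alternatingFixLeft f u v = f (Sum.elim u v) := rfl

theorem alternatingMap_eq_zero_of_card_lt [Fintype ι] [Fintype κ] (b : Basis ι R M)
    (h : Fintype.card ι < Fintype.card κ) (f : M [⋀^κ]→ₗ[R] P) : f = 0 :=
  b.ext_alternating fun v hv => absurd (Fintype.card_le_of_injective v hv) h.not_ge

theorem domCoprod_summand_apply_eq_zero [Fintype ι] [Fintype κ] [DecidableEq ι] [DecidableEq κ]
    {f : M [⋀^ι]→ₗ[R] P} {g : M [⋀^κ]→ₗ[R] Q} {N : Submodule R M}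
    (hg : ∀ y b, y b ∈ N → g y = 0) {u : ι → M} (hu : ∀ a, u a ∈ N) (y : κ → M)
    {σ : Equiv.Perm.ModSumCongr ι κ} (hσ : σ ≠ Quotient.mk'' 1) :
    AlternatingMap.domCoprod.summand f g σ (Sum.elim u y) = 0 := by
  induction σ using Quotient.inductionOn' with | _ σ
  obtain ⟨b, a, hba⟩ : ∃ b a, σ (Sum.inr b) = Sum.inl a := by
    by_contra! hcon
    refine hσ (Quotient.sound' ?_)
    rw [QuotientGroup.leftRel_apply, mul_one]
    apply Equiv.Perm.mem_sumCongrHom_range_of_perm_mapsTo_inl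
    rintro _ ⟨a, rfl⟩
    rcases hx : σ⁻¹ (Sum.inl a) with a' | b
    · exact ⟨a', rfl⟩
    · exact absurd (Equiv.Perm.inv_eq_iff_eq.mp hx).symm (hcon b a)
  have hzero : g (fun i => Sum.elim u y (σ (Sum.inr i))) = 0 :=
    hg _ b (by simpa only [hba, Sum.elim_inl] using hu a)
  simp only [AlternatingMap.domCoprod.summand_mk'', smul_apply, MultilinearMap.domDomCongr_apply,
    MultilinearMap.domCoprod_apply, AlternatingMap.coe_multilinearMap, hzero,
    TensorProduct.tmul_zero, smul_zero]

theorem domCoprod_apply_sumElim [Fintype ι] [Fintype κ] [DecidableEq ι] [DecidableEq κ]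
    (f : M [⋀^ι]→ₗ[R] P) {g : M [⋀^κ]→ₗ[R] Q} {N : Submodule R M}
    (hg : ∀ y b, y b ∈ N → g y = 0) {u : ι → M} (hu : ∀ a, u a ∈ N) (y : κ → M) :
    f.domCoprod g (Sum.elim u y) = f u ⊗ₜ[R] g y :=
  calc f.domCoprod g (Sum.elim u y)
    _ = ∑ σ, AlternatingMap.domCoprod.summand f g σ (Sum.elim u y) := by
      rw [← AlternatingMap.coe_multilinearMap, AlternatingMap.domCoprod_coe, sum_apply]
    _ = AlternatingMap.domCoprod.summand f g (Quotient.mk'' 1) (Sum.elim u y) :=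
      Finset.sum_eq_single _ (fun _ _ hσ => domCoprod_summand_apply_eq_zero hg hu y hσ) (by simp)
    _ = f u ⊗ₜ[R] g y := by simp [AlternatingMap.domCoprod.summand_mk'']

theorem alternatingMap_congr_of_sub_mem [Finite ι] {N : Submodule R M} {g : M [⋀^ι]→ₗ[R] P}
    (hg : ∀ y b, y b ∈ N → g y = 0) {u v : ι → M} (huv : ∀ i, u i - v i ∈ N) : g u = g v := by
  classical
  have := Fintype.ofFinite ι
  let _ : LinearOrder ι := linearOrderOfSTO WellOrderingRel
  have hdiff := g.toMultilinearMap.map_sub_map_piecewise u v Finset.univ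
  rw [Finset.piecewise_univ, Finset.sum_eq_zero] at hdiff
  · exact sub_eq_zero.mp hdiff
  · exact fun i _ => hg _ i (by simpa using huv i)

theorem exists_compLinearMap_eq_of_surjective [Finite ι] {π : M →ₗ[R] M'}
    (hπ : Function.Surjective π) (g : M [⋀^ι]→ₗ[R] P)
    (hg : ∀ y b, y b ∈ LinearMap.ker π → g y = 0) :
    ∃ f : M' [⋀^ι]→ₗ[R] P, f.compLinearMap π = g := by
  let s : M' → M := Function.surjInv hπ
  have hs : ∀ x, π (s x) = x := Function.surjInv_eq hπ
  have hcongr {u v : ι → M} (huv : ∀ i, π (u i) = π (v i)) : g u = g v :=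
    alternatingMap_congr_of_sub_mem hg fun i => LinearMap.sub_mem_ker_iff.mpr (huv i)
  have hupdate [DecidableEq ι] (u : ι → M') (i : ι) (x : M) :
      g (s ∘ Function.update u i (π x)) = g (Function.update (s ∘ u) i x) := by
    refine hcongr fun a => ?_
    obtain rfl | ha := eq_or_ne a i <;> simp [*]
  refine ⟨{ toFun := fun u => g (s ∘ u), map_update_add' := ?_, map_update_smul' := ?_,
            map_eq_zero_of_eq' := ?_ }, ?_⟩
  · intro _ u i x y
    obtain ⟨x, rfl⟩ := hπ x
    obtain ⟨y, rfl⟩ := hπ y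
    simp only [← map_add, hupdate, g.map_update_add]
  · intro _ u i c x
    obtain ⟨x, rfl⟩ := hπ x
    simp only [← map_smul, hupdate, g.map_update_smul]
  · exact fun u i j hij hne => g.map_eq_zero_of_eq _ (congrArg s hij) hne
  · ext u
    exact hcongr fun i => hs _

theorem alternatingMap_apply_mem_span_det [Finite ι] (b : Basis ι R M) {j : ℕ}
    (f : M [⋀^Fin j]→ₗ[R] R) (u : Fin j → M) :
    f u ∈ Ideal.span
      (Set.range fun r : Fin j ↪ ι => (Matrix.of fun a c => b.repr (u c) (r a)).det) := by
  classical
  have := Fintype.ofFinite ι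
  let _ : LinearOrder ι := linearOrderOfSTO WellOrderingRel
  rw [← exteriorPower.alternatingMapLinearEquiv_apply_ιMulti,
    ← (b.exteriorPower j).sum_repr (exteriorPower.ιMulti R j u), map_sum]
  refine Submodule.sum_mem _ fun s _ => ?_
  rw [map_smul, exteriorPower.basis_repr_apply, exteriorPower.ιMultiDual_apply_ιMulti, smul_eq_mul]
  refine Ideal.mul_mem_right _ _ (Ideal.subset_span
    ⟨(Set.powersetCard.ofFinEmbEquiv.symm s).toEmbedding, ?_⟩)
  rw [← Matrix.det_transpose]
  rfl

theorem basis_det_sumElim [Fintype ι] [Fintype κ] [DecidableEq ι] [DecidableEq κ]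
    (b : Basis (ι ⊕ κ) R M) (u : ι → M) :
    b.det (Sum.elim u (b ∘ Sum.inr)) = (Matrix.of fun a c => b.repr (u c) (Sum.inl a)).det := by
  have hblocks : b.toMatrix (Sum.elim u (b ∘ Sum.inr)) =
      Matrix.fromBlocks (.of fun a c => b.repr (u c) (Sum.inl a)) 0
        (.of fun a c => b.repr (u c) (Sum.inr a)) 1 := by
    ext (x | x) (y | y) <;>
      simp [Basis.toMatrix_apply, Finsupp.single_apply, Matrix.one_apply, eq_comm]
  rw [Basis.det_apply, hblocks, Matrix.det_fromBlocks_zero₁₂, Matrix.det_one, mul_one]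

end AlternatingMap

section ExteriorPower

variable {R M P : Type*} [CommRing R] [AddCommGroup M] [Module R M] [AddCommGroup P] [Module R P]
  {k l : ℕ} {a : R}

theorem mem_annihilator_exteriorPower :
    a ∈ annihilator R (⋀[R]^k M) ↔ ∀ x : Fin k → M, a • exteriorPower.ιMulti R k x = 0 := by
  refine ⟨fun ha x => mem_annihilator.mp ha _, fun ha => mem_annihilator.mpr fun y => ?_⟩
  have hsmul : LinearMap.lsmul R (⋀[R]^k M) a = 0 := by
    ext x : 2
    exact ha x
  exact LinearMap.congr_fun hsmul y

theorem smul_alternatingMap_apply_eq_zero (ha : a ∈ annihilator R (⋀[R]^k M))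
    (f : M [⋀^Fin k]→ₗ[R] P) (x : Fin k → M) : a • f x = 0 := by
  rw [← exteriorPower.alternatingMapLinearEquiv_apply_ιMulti, ← map_smul,
    mem_annihilator_exteriorPower.mp ha, map_zero]

theorem annihilator_exteriorPower_mono (h : k ≤ l) :
    annihilator R (⋀[R]^k M) ≤ annihilator R (⋀[R]^l M) := by
  refine monotone_nat_of_le_succ (f := fun k => annihilator R (⋀[R]^k M)) (fun k a ha => ?_) h
  refine mem_annihilator_exteriorPower.mpr fun x => ?_
  have hcurry := smul_alternatingMap_apply_eq_zero ha
    ((exteriorPower.ιMulti R (k + 1)).curryLeft (x 0)) (Matrix.vecTail x)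
  rwa [AlternatingMap.curryLeft_apply_apply, show Matrix.vecCons (x 0) (Matrix.vecTail x) = x from
    Matrix.cons_head_tail x] at hcurry

theorem smul_alternatingMap_apply_eq_zero_of_quotient {N : Submodule R M}
    (ha : a ∈ annihilator R (⋀[R]^k (M ⧸ N))) {g : M [⋀^Fin k]→ₗ[R] P}
    (hg : ∀ y b, y b ∈ N → g y = 0) (x : Fin k → M) : a • g x = 0 := by
  obtain ⟨f, rfl⟩ := exists_compLinearMap_eq_of_surjective N.mkQ_surjective g
    (by simpa only [Submodule.ker_mkQ] using hg)
  exact smul_alternatingMap_apply_eq_zero ha f _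

end ExteriorPower

section DeterminantalIdeal

variable {R F ι κ : Type*} [CommRing R] [AddCommGroup F] [Module R F] {i j k : ℕ}

/-- The `j`-th determinantal ideal of a submodule `N` of `F`, generated by the values on `N` of all
alternating `j`-forms of `F`. For `F` free and `N` the range of a linear map `φ` this is the ideal
`I_j(φ)` of `j × j` minors, in a form that does not refer to bases. -/
def determinantalIdeal (N : Submodule R F) (j : ℕ) : Ideal R :=
  Ideal.span {d | ∃ (f : F [⋀^Fin j]→ₗ[R] R) (u : Fin j → F), (∀ a, u a ∈ N) ∧ d = f u}

variable {N : Submodule R F}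

theorem alternatingMap_apply_mem_determinantalIdeal (f : F [⋀^Fin j]→ₗ[R] R) {u : Fin j → F}
    (hu : ∀ a, u a ∈ N) : f u ∈ determinantalIdeal N j :=
  Ideal.subset_span ⟨f, u, hu, rfl⟩

theorem alternatingMap_apply_mem_determinantalIdeal_of_embedding (f : F [⋀^κ]→ₗ[R] R) (v : κ → F)
    (p : Fin j ↪ κ) (hp : ∀ a, v (p a) ∈ N) : f v ∈ determinantalIdeal N j := by
  obtain ⟨e, he⟩ := exists_sum_compl_range_equiv p
  let f' := f.domDomCongr (e.symm.trans (Equiv.sumComm _ _))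
  have hf : alternatingFixLeft f' (v ∘ e ∘ Sum.inr) (v ∘ p) = f v := by
    rw [alternatingFixLeft_apply, AlternatingMap.domDomCongr_apply]
    congr 1
    funext x
    obtain ⟨x | x, rfl⟩ := e.surjective x <;> simp [← he]
  exact hf ▸ alternatingMap_apply_mem_determinantalIdeal _ hp

theorem determinantalIdeal_zero : determinantalIdeal N 0 = ⊤ :=
  (Ideal.eq_top_iff_one _).mpr <| alternatingMap_apply_mem_determinantalIdeal
    (AlternatingMap.constOfIsEmpty R F (Fin 0) 1) (u := Fin.elim0) (fun a => a.elim0)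

theorem determinantalIdeal_le_annihilator [Fintype ι] (b : Basis ι R F)
    (h : Fintype.card ι < j + k) :
    determinantalIdeal N j ≤ annihilator R (⋀[R]^k (F ⧸ N)) := by
  refine Ideal.span_le.mpr ?_
  rintro _ ⟨f, u, hu, rfl⟩
  refine mem_annihilator_exteriorPower.mpr fun x => ?_
  obtain ⟨y, rfl⟩ := N.mkQ_surjective.comp_left x
  let g := (exteriorPower.ιMulti R k).compLinearMap N.mkQ
  have hg : ∀ y b, y b ∈ N → g y = 0 := fun y b hb =>
    (exteriorPower.ιMulti R k).map_coord_zero b ((Submodule.Quotient.mk_eq_zero N).mpr hb)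
  have hwedge : f.domCoprod g = 0 := alternatingMap_eq_zero_of_card_lt b (by simpa using h) _
  have htmul : f u ⊗ₜ[R] g y = 0 := by
    rw [← domCoprod_apply_sumElim f hg hu, hwedge, AlternatingMap.zero_apply]
  have hsmul : f u • g y = 0 := by simpa using congrArg (TensorProduct.lid R _) htmul
  exact hsmul

theorem mul_apply_sumElim_mem_determinantalIdeal {a : R}
    (ha : a ∈ annihilator R (⋀[R]^k (F ⧸ N))) (D : F [⋀^Fin i ⊕ Fin k]→ₗ[R] R) {u : Fin i → F}
    (hu : ∀ x, u x ∈ N) (y : Fin k → F) :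
    a * D (Sum.elim u y) ∈ determinantalIdeal N (i + 1) := by
  let I := determinantalIdeal N (i + 1)
  have hvanish : ∀ y b, y b ∈ N → I.mkQ.compAlternatingMap (alternatingFixLeft D u) y = 0 := by
    intro y b hb
    let p : Fin (i + 1) ↪ Fin i ⊕ Fin k :=
      ⟨Fin.cons (Sum.inr b) Sum.inl, Fin.cons_injective_iff.mpr ⟨by simp, Sum.inl_injective⟩⟩
    have hp : ∀ x, Sum.elim u y (p x) ∈ N := Fin.cases hb hu
    exact (Submodule.Quotient.mk_eq_zero I).mpr
      (alternatingMap_apply_mem_determinantalIdeal_of_embedding D _ p hp)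
  exact (Submodule.Quotient.mk_eq_zero I).mp
    (smul_alternatingMap_apply_eq_zero_of_quotient ha hvanish y)

theorem annihilator_mul_determinantalIdeal_le [Fintype ι] (b : Basis ι R F)
    (h : i + k = Fintype.card ι) :
    annihilator R (⋀[R]^k (F ⧸ N)) * determinantalIdeal N i ≤ determinantalIdeal N (i + 1) := by
  classical
  refine Ideal.mul_le.mpr fun a ha d hd => ?_
  suffices hle : determinantalIdeal N i ≤
      Submodule.comap (LinearMap.lsmul R R a) (determinantalIdeal N (i + 1)) from hle hd
  refine Submodule.span_le.mpr ?_
  rintro _ ⟨f, u, hu, rfl⟩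
  refine Submodule.span_le.mpr ?_ (alternatingMap_apply_mem_span_det b f u)
  rintro _ ⟨r, rfl⟩
  obtain ⟨e, he⟩ := exists_sum_equiv_of_card_eq (β := Fin k) r (by simpa using h)
  let b' := b.reindex e.symm
  have hdet : b'.det (Sum.elim u (b' ∘ Sum.inr)) =
      (Matrix.of fun x c => b.repr (u c) (r x)).det := by
    simp only [basis_det_sumElim, b', Basis.repr_reindex_apply, Equiv.symm_symm, he]
  have hmem := mul_apply_sumElim_mem_determinantalIdeal ha b'.det hu (b' ∘ Sum.inr)
  rwa [hdet] at hmem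

theorem annihilator_pow_le_determinantalIdeal [Fintype ι] (b : Basis ι R F)
    (h : j + k ≤ Fintype.card ι + 1) :
    annihilator R (⋀[R]^k (F ⧸ N)) ^ j ≤ determinantalIdeal N j := by
  induction j with
  | zero => exact determinantalIdeal_zero.ge.trans' le_top
  | succ i ih =>
    rw [pow_succ']
    calc annihilator R (⋀[R]^k (F ⧸ N)) * annihilator R (⋀[R]^k (F ⧸ N)) ^ i
      _ ≤ annihilator R (⋀[R]^(Fintype.card ι - i) (F ⧸ N)) * determinantalIdeal N i :=
        Ideal.mul_mono (annihilator_exteriorPower_mono (by lia)) (ih (by lia))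
      _ ≤ determinantalIdeal N (i + 1) := annihilator_mul_determinantalIdeal_le b (by lia)

end DeterminantalIdeal

theorem minorsIdeal_eq_determinantalIdeal {R : Type*} [CommRing R] {m n : ℕ}
    (A : Matrix (Fin m) (Fin n) R) (j : ℕ) :
    A.minorsIdeal j = determinantalIdeal (LinearMap.range A.mulVecLin) j := by
  refine le_antisymm (Ideal.span_le.mpr ?_) (Ideal.span_le.mpr ?_)
  · rintro _ ⟨r, c, rfl⟩
    have hcol (a) : A.col (c a) ∈ LinearMap.range A.mulVecLin :=
      ⟨Pi.single (c a) 1, A.mulVec_single_one (c a)⟩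
    have hminor := alternatingMap_apply_mem_determinantalIdeal
      (Matrix.detRowAlternating.compLinearMap (LinearMap.funLeft R R r)) hcol
    rwa [SetLike.mem_coe, ← Matrix.det_transpose]
  · rintro _ ⟨f, u, hu, rfl⟩
    choose x hx using hu
    have hzero : ((A.minorsIdeal j).mkQ.compAlternatingMap f).compLinearMap A.mulVecLin = 0 := by
      refine (Pi.basisFun R (Fin n)).ext_alternating fun c _ => ?_
      refine (Submodule.Quotient.mk_eq_zero _).mpr (Ideal.span_mono ?_
        (alternatingMap_apply_mem_span_det (Pi.basisFun R (Fin m)) f _))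
      rintro _ ⟨r, rfl⟩
      exact ⟨r, c, congrArg Matrix.det (by ext; simp)⟩
    have hmem : f (fun a => A.mulVecLin (x a)) ∈ A.minorsIdeal j :=
      (Submodule.Quotient.mk_eq_zero _).mp (AlternatingMap.congr_fun hzero x)
    rwa [funext hx] at hmem

theorem stmt11_general {R F ι : Type*} [CommRing R] [AddCommGroup F] [Module R F] [Fintype ι]
    (b : Basis ι R F) (N : Submodule R F) {j k : ℕ} (h : j + k = Fintype.card ι + 1) :
    determinantalIdeal N j ≤ annihilator R (⋀[R]^k (F ⧸ N)) ∧
      annihilator R (⋀[R]^k (F ⧸ N)) ^ j ≤ determinantalIdeal N j :=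
  ⟨determinantalIdeal_le_annihilator b (by lia), annihilator_pow_le_determinantalIdeal b h.le⟩

theorem stmt11 {R : Type*} [CommRing R] {m n : ℕ}
    (A : Matrix (Fin m) (Fin n) R) (j : ℕ) (hj1 : 1 ≤ j) (hjm : j ≤ m) :
    A.minorsIdeal j ≤ A.annCokerJ j ∧ (A.annCokerJ j) ^ j ≤ A.minorsIdeal j := by
  rw [minorsIdeal_eq_determinantalIdeal]
  exact stmt11_general (Pi.basisFun R (Fin m)) _ (by rw [Fintype.card_fin]; lia)
end

section
/- Let R be a commutative local ring with maximal ideal m and A = diag(λ₁, ..., λ_m) a diagonal m×m matrix with (λ₁) ⊇ (λ₂) ⊇ ... ⊇ (λ_m) as ideals. Then for each 1 ≤ j ≤ m the generalized annihilator satisfies ann.coker_j(A) = (λ_j). -/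
/-!
Write `C = coker A = ⨁ R/(λᵢ)` and `n = m + 1 - j`, the number of indices `≥ j`. By pigeonhole,
every `n`-fold wedge of distinct generators of `C` involves some index `i ≤ j`, so it is killed by
`λᵢ`, hence by `λⱼ`. Conversely, projecting `C` to its last `n` summands and reducing modulo `λⱼ`
maps it onto `(R/(λⱼ))ⁿ`, and the determinant maps the `n`-th exterior power of the latter onto
`R/(λⱼ)`.
-/

section ExteriorPower

variable {R : Type*} [CommRing R]

theorem mem_annihilator_exteriorPower_of_span {M ι : Type*} [AddCommGroup M] [Module R M]
    {v : ι → M} (hv : Submodule.span R (Set.range v) = ⊤) {n : ℕ} {r : R}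
    (hr : ∀ t : Finset ι, t.card = n → ∃ i ∈ t, r • v i = 0) :
    r ∈ Module.annihilator R (⋀[R]^n M) := by
  let : LinearOrder ι := IsWellOrder.linearOrder WellOrderingRel
  rw [← Submodule.annihilator_top, ← exteriorPower.ιMulti_family_span_of_span R hv,
    Submodule.mem_annihilator_span]
  rintro ⟨_, s, rfl⟩
  obtain ⟨i, his, hi⟩ := hr s.1 s.2
  obtain ⟨k, rfl⟩ := (Set.powersetCard.mem_range_ofFinEmbEquiv_symm_iff_mem s i).mpr his
  set w := v ∘ Set.powersetCard.ofFinEmbEquiv.symm s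
  calc r • exteriorPower.ιMulti R n w
      = exteriorPower.ιMulti R n (Function.update w k (r • w k)) := by
        rw [AlternatingMap.map_update_smul, Function.update_eq_self]
    _ = 0 := by
        rw [show r • w k = 0 from hi, AlternatingMap.map_update_zero]

/-- Restriction of scalars of an alternating map. It lets the determinant over an `R`-algebra act
on exterior powers formed over `R`. -/
def alternatingMapRestrictScalars (R : Type*) {S M N ι : Type*} [CommSemiring R] [Semiring S]
    [Algebra R S]
    [AddCommMonoid M] [Module R M] [Module S M] [IsScalarTower R S M]
    [AddCommMonoid N] [Module R N] [Module S N] [IsScalarTower R S N]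
    (f : M [⋀^ι]→ₗ[S] N) : M [⋀^ι]→ₗ[R] N :=
  { f with toMultilinearMap := f.toMultilinearMap.restrictScalars R }

theorem annihilator_exteriorPower_pi_le_ker_algebraMap {S : Type*} [CommRing S] [Algebra R S]
    (n : ℕ) :
    Module.annihilator R (⋀[R]^n (Fin n → S)) ≤ RingHom.ker (algebraMap R S) := by
  intro r hr
  let det : ⋀[R]^n (Fin n → S) →ₗ[R] S := exteriorPower.alternatingMapLinearEquiv
    (alternatingMapRestrictScalars R Matrix.detRowAlternating)
  let ω : ⋀[R]^n (Fin n → S) := exteriorPower.ιMulti R n (1 : Matrix (Fin n) (Fin n) S)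
  have det_ω : det ω = 1 :=
    (exteriorPower.alternatingMapLinearEquiv_apply_ιMulti _ _).trans Matrix.det_one
  calc algebraMap R S r = det (r • ω) := by rw [map_smul, det_ω, Algebra.algebraMap_eq_smul_one]
    _ = 0 := by rw [Module.mem_annihilator.mp hr ω, map_zero]

end ExteriorPower

/-- The cokernel `⨁ R/(λᵢ)` of the square matrix `diag(λᵢ)`, presented as a quotient of the free
module so that for indices in `Fin m` it is the module appearing in `Matrix.annCokerJ`. -/
abbrev DiagonalCoker {R ι : Type*} [CommRing R] [Fintype ι] [DecidableEq ι] (lam : ι → R) :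
    Type _ :=
  (ι → R) ⧸ LinearMap.range (Matrix.diagonal lam).mulVecLin

namespace DiagonalCoker

variable {R ι : Type*} [CommRing R] [Fintype ι] [DecidableEq ι] (lam : ι → R)

/-- The generator of the `i`-th summand of `⨁ R/(λᵢ)`: the class of the `i`-th unit vector. -/
def gen (i : ι) : DiagonalCoker lam :=
  Submodule.Quotient.mk (Pi.single i 1)

theorem span_range_gen : Submodule.span R (Set.range (gen lam)) = ⊤ := by
  have hgen : gen lam = Submodule.mkQ _ ∘ Pi.basisFun R ι := by
    funext i
    simp [gen]
  rw [hgen, Set.range_comp, Submodule.span_image, Module.Basis.span_eq, Submodule.map_top,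
    Submodule.range_mkQ]

variable {lam}

theorem smul_gen_eq_zero_of_dvd {r : R} {i : ι} (h : lam i ∣ r) : r • gen lam i = 0 := by
  obtain ⟨c, rfl⟩ := h
  rw [gen, ← Submodule.Quotient.mk_smul, Submodule.Quotient.mk_eq_zero]
  refine ⟨Pi.single i c, ?_⟩
  rw [Matrix.mulVecLin_apply, Matrix.diagonal_mulVec_single, ← Pi.single_smul', smul_eq_mul,
    mul_one]

theorem exists_surjective_pi_quotient {κ : Type*} {f : κ → ι} (hf : Function.Injective f)
    {I : Ideal R} (hI : ∀ k, lam (f k) ∈ I) :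
    ∃ φ : DiagonalCoker lam →ₗ[R] κ → R ⧸ I, Function.Surjective φ := by
  let ψ : (ι → R) →ₗ[R] κ → R ⧸ I := I.mkQ.compLeft κ ∘ₗ LinearMap.funLeft R R f
  have hψ : Function.Surjective ψ :=
    I.mkQ_surjective.comp_left.comp (LinearMap.funLeft_surjective_of_injective R R f hf)
  have range_le_ker : LinearMap.range (Matrix.diagonal lam).mulVecLin ≤ LinearMap.ker ψ := by
    rintro _ ⟨x, rfl⟩
    funext k
    have hmem : (Matrix.diagonal lam).mulVec x (f k) ∈ I := by
      rw [Matrix.mulVec_diagonal]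
      exact I.mul_mem_right _ (hI k)
    exact Ideal.Quotient.eq_zero_iff_mem.mpr hmem
  exact ⟨Submodule.liftQ _ ψ range_le_ker, .of_comp (g := Submodule.Quotient.mk) hψ⟩

theorem mem_annihilator_exteriorPower {n : ℕ} {r : R}
    (hr : ∀ t : Finset ι, t.card = n → ∃ i ∈ t, lam i ∣ r) :
    r ∈ Module.annihilator R (⋀[R]^n (DiagonalCoker lam)) :=
  mem_annihilator_exteriorPower_of_span (span_range_gen lam) fun t ht ↦
    (hr t ht).imp fun _ ↦ And.imp_right smul_gen_eq_zero_of_dvd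

theorem annihilator_exteriorPower_card_le {t : Finset ι} {I : Ideal R} (hI : ∀ i ∈ t, lam i ∈ I) :
    Module.annihilator R (⋀[R]^t.card (DiagonalCoker lam)) ≤ I := by
  obtain ⟨φ, hφ⟩ := exists_surjective_pi_quotient (f := fun k ↦ (t.equivFin.symm k : ι))
    (Subtype.val_injective.comp t.equivFin.symm.injective) fun k ↦ hI _ (t.equivFin.symm k).2
  calc Module.annihilator R (⋀[R]^t.card (DiagonalCoker lam))
      ≤ Module.annihilator R (⋀[R]^t.card (Fin t.card → R ⧸ I)) :=
        (exteriorPower.map t.card φ).annihilator_le_of_surjective (exteriorPower.map_surjective hφ)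
    _ ≤ RingHom.ker (algebraMap R (R ⧸ I)) := annihilator_exteriorPower_pi_le_ker_algebraMap _
    _ = I := Ideal.mk_ker

end DiagonalCoker

theorem stmt19_general {R : Type*} [CommRing R] {m : ℕ} (lam : Fin m → R) (j : Fin m)
    (hle : ∀ i ≤ j, lam i ∣ lam j) (hge : ∀ i, j ≤ i → lam j ∣ lam i) :
    (Matrix.diagonal lam).annCokerJ ((j : ℕ) + 1) = Ideal.span {lam j} := by
  have card_Ici : (Finset.Ici j).card = m + 1 - (j + 1) := by simp
  rw [Matrix.annCokerJ, ← card_Ici]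
  apply le_antisymm
  · refine DiagonalCoker.annihilator_exteriorPower_card_le fun i hi ↦ ?_
    exact Ideal.mem_span_singleton.mpr (hge i (Finset.mem_Ici.mp hi))
  · rw [Ideal.span_singleton_le_iff_mem]
    refine DiagonalCoker.mem_annihilator_exteriorPower fun t ht ↦ ?_
    have card_lt : Fintype.card (Fin m) < t.card + (Finset.Iic j).card := by
      rw [ht, card_Ici, Fin.card_Iic, Fintype.card_fin]
      omega
    obtain ⟨i, hi⟩ := Finset.inter_nonempty_of_card_lt_card_add_card t.subset_univ
      (Finset.Iic j).subset_univ card_lt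
    rw [Finset.mem_inter, Finset.mem_Iic] at hi
    exact ⟨i, hi.1, hle i hi.2⟩

theorem stmt19 {R : Type*} [CommRing R] [IsLocalRing R] {m : ℕ}
    (lam : Fin m → R)
    (hdvd : ∀ i j : Fin m, i ≤ j → Ideal.span {lam j} ≤ Ideal.span {lam i})
    (j : Fin m) :
    (Matrix.diagonal lam).annCokerJ ((j : ℕ) + 1) = Ideal.span {lam j} :=
  stmt19_general lam j (fun i hi ↦ Ideal.span_singleton_le_span_singleton.mp (hdvd i j hi))
    fun i hi ↦ Ideal.span_singleton_le_span_singleton.mp (hdvd j i hi)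
end
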